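/- Let β > 0, let q ≥ 0 be such that q is not of the form k + 1/2 for a nonnegative integer k, and let 0 < c < 1. Define f_1(s) = (πs/sin(πs)) · M(q+1; q+5/2; 2s/β) and F_q^{(1)}(η,β) = (1/(2π)) ∫_{-∞}^∞ e^{η(c+it)} f_1(c+it)/(c+it) dt. Then for every η > 0 the series Σ_{n=0}^∞ (−1)^n e^{−nη} M(q+1; q+5/2; −2n/β) converges and F_q^{(1)}(η,β) = Σ_{n=0}^∞ (−1)^n e^{−nη} M(q+1; q+5/2; −2n/β). -/

import Mathlib

open Real MeasureTheory Set

/-- Kummer's confluent hypergeometric function `M(a;b;z)` as a power series. -/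
noncomputable def kummerM (a b z : ℂ) : ℂ :=
  ∑' k : ℕ, (ascPochhammer ℂ k).eval a /
      ((ascPochhammer ℂ k).eval b * (k.factorial : ℂ)) * z ^ k

/-- The function `f_1(s)`. -/
noncomputable def f1 (q β : ℝ) (s : ℂ) : ℂ :=
  (π : ℂ) * s / Complex.sin ((π : ℂ) * s) *
    kummerM ((q : ℂ) + 1) ((q : ℂ) + 5 / 2) (2 * s / (β : ℂ))

/-- The function `F_q^{(1)}(η,β)`. -/
noncomputable def F1 (q β c η : ℝ) : ℂ :=
  (1 / (2 * (π : ℂ))) * ∫ t : ℝ,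
    Complex.exp ((η : ℂ) * ((c : ℂ) + t * Complex.I)) *
      f1 q β ((c : ℂ) + t * Complex.I) / ((c : ℂ) + t * Complex.I)

lemma cosh_lower (y : ℝ) : 1 + y ^ 2 / 2 ≤ Real.cosh y := by
  have h1 : Real.cosh y = 1 + 2 * Real.sinh (y / 2) ^ 2 := by
    have h := Real.cosh_two_mul (y / 2)
    have h2 := Real.cosh_sq (y / 2)
    rw [show 2 * (y / 2) = y by ring] at h
    linarith
  have h2 : (y / 2) ^ 2 ≤ Real.sinh (y / 2) ^ 2 := by
    rw [sq_le_sq, Real.abs_sinh]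
    exact Real.self_le_sinh_iff.2 (abs_nonneg _)
  nlinarith

lemma sin_lower (c : ℝ) (hc0 : 0 < c) (hc1 : c < 1) (t : ℝ) :
    Real.sin (π * c) * (1 + t ^ 2) ≤ ‖Complex.sin ((π : ℂ) * ((c : ℂ) + t * Complex.I))‖ := by
  have hs : 0 < Real.sin (π * c) :=
    Real.sin_pos_of_pos_of_lt_pi (by positivity) (by nlinarith [Real.pi_pos])
  have e : (Complex.sin ((π : ℂ) * ((c : ℂ) + t * Complex.I))).re
      = Real.sin (π * c) * Real.cosh (π * t) := by
    rw [show (π : ℂ) * ((c : ℂ) + t * Complex.I) = ((π * c : ℝ) : ℂ) + ((π * t : ℝ) : ℂ) * Complex.I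
      by push_cast; ring, Complex.sin_add_mul_I]
    rw [← Complex.ofReal_sin, ← Complex.ofReal_cos, ← Complex.ofReal_cosh, ← Complex.ofReal_sinh]
    simp only [Complex.add_re, Complex.mul_re, Complex.ofReal_re, Complex.ofReal_im, Complex.I_re,
      Complex.I_im, Complex.mul_im]
    ring
  refine le_trans ?_ ((le_abs_self _).trans (Complex.abs_re_le_norm _))
  rw [e]
  have := cosh_lower (π * t)
  have hp : 3 < π := Real.pi_gt_three
  have : 1 + t ^ 2 ≤ Real.cosh (π * t) := by
    have : 9 * t ^ 2 ≤ π ^ 2 * t ^ 2 := by gcongr; nlinarith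
    nlinarith [sq_nonneg t]
  gcongr

lemma sin_ne (c : ℝ) (hc0 : 0 < c) (hc1 : c < 1) (t : ℝ) :
    Complex.sin ((π : ℂ) * ((c : ℂ) + t * Complex.I)) ≠ 0 := by
  have hs : 0 < Real.sin (π * c) :=
    Real.sin_pos_of_pos_of_lt_pi (by positivity) (by nlinarith [Real.pi_pos])
  have := sin_lower c hc0 hc1 t
  rw [← norm_pos_iff]
  refine lt_of_lt_of_le ?_ this
  positivity

lemma csc_integrable (c : ℝ) (hc0 : 0 < c) (hc1 : c < 1) :
    Integrable (fun t : ℝ => (π : ℂ) / Complex.sin ((π : ℂ) * ((c : ℂ) + t * Complex.I))) := by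
  have hs : 0 < Real.sin (π * c) :=
    Real.sin_pos_of_pos_of_lt_pi (by positivity) (by nlinarith [Real.pi_pos])
  refine (integrable_inv_one_add_sq.const_mul (π / Real.sin (π * c))).mono' ?_ ?_
  · refine Continuous.aestronglyMeasurable ?_
    refine continuous_const.div (by fun_prop) (sin_ne c hc0 hc1)
  · refine Filter.Eventually.of_forall fun t => ?_
    rw [norm_div, Complex.norm_real, Real.norm_of_nonneg Real.pi_pos.le]
    rw [← div_eq_mul_inv, div_div]
    have := sin_lower c hc0 hc1 t
    gcongr

lemma image_frac : (fun u : ℝ => u / (1 - u)) '' Ioo 0 1 = Ioi 0 := by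
  ext y
  simp only [mem_image, mem_Ioo, mem_Ioi]
  constructor
  · rintro ⟨u, ⟨h0, h1⟩, rfl⟩
    exact div_pos h0 (by linarith)
  · intro hy
    refine ⟨y / (1 + y), ⟨by positivity, (div_lt_one (by linarith)).2 (by linarith)⟩, ?_⟩
    have : (1 + y) ≠ 0 := by positivity
    field_simp
    ring

lemma deriv_frac : ∀ u ∈ Ioo (0 : ℝ) 1,
    HasDerivWithinAt (fun u : ℝ => u / (1 - u)) (1 / (1 - u) ^ 2) (Ioo 0 1) u := by
  intro u hu
  have h : (1 - u) ≠ 0 := by linarith [hu.2]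
  have := (hasDerivAt_id u).div ((hasDerivAt_const u (1 : ℝ)).sub (hasDerivAt_id u)) h
  refine HasDerivAt.hasDerivWithinAt ?_
  convert! this using 1
  simp

lemma inj_frac : InjOn (fun u : ℝ => u / (1 - u)) (Ioo 0 1) := by
  intro u hu v hv h
  have h1 : (1 - u) ≠ 0 := by linarith [hu.2]
  have h2 : (1 - v) ≠ 0 := by linarith [hv.2]
  simp only at h
  rw [div_eq_div_iff h1 h2] at h
  linarith

lemma frac_integrand (s : ℂ) : ∀ u ∈ Ioo (0 : ℝ) 1,
    |1 / (1 - u) ^ 2| • (((u / (1 - u) : ℝ) : ℂ) ^ (s - 1) •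
      (1 / (1 + ((u / (1 - u) : ℝ) : ℂ)))) =
    (u : ℂ) ^ (s - 1) * (1 - (u : ℂ)) ^ ((1 - s) - 1) := by
  intro u hu
  have h0 := hu.1
  have h1 : 0 < 1 - u := by linarith [hu.2]
  have h1c : (1 - (u : ℂ)) ≠ 0 := by exact_mod_cast h1.ne'
  have e1 : ((u / (1 - u) : ℝ) : ℂ) ^ (s - 1) * (1 - (u : ℂ)) ^ (s - 1) = (u : ℂ) ^ (s - 1) := by
    have := Complex.mul_cpow_ofReal_nonneg (div_nonneg h0.le h1.le) h1.le (s - 1)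
    rw [show (1 - (u : ℂ)) = ((1 - u : ℝ) : ℂ) by push_cast; rfl, ← this, ← Complex.ofReal_mul,
      div_mul_cancel₀ _ h1.ne']
  have e2 : (1 - (u : ℂ)) ^ (s - 1) * (1 - (u : ℂ)) ^ ((1 - s) - 1) = (1 - (u : ℂ))⁻¹ := by
    rw [← Complex.cpow_add _ _ h1c, ← Complex.cpow_neg_one]
    congr 1; ring
  rw [abs_of_pos (by positivity), ← e1, mul_assoc, e2]
  have e3 : (1 : ℂ) + ((u / (1 - u) : ℝ) : ℂ) = (1 - (u : ℂ))⁻¹ := by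
    push_cast
    field_simp
    ring
  rw [e3, Complex.real_smul, smul_eq_mul]
  push_cast
  field_simp

lemma mellin_conv (s : ℂ) (h0 : 0 < s.re) (h1 : s.re < 1) :
    MellinConvergent (fun y : ℝ => (1 / (1 + (y : ℂ)))) s := by
  rw [MellinConvergent, ← image_frac,
    integrableOn_image_iff_integrableOn_abs_deriv_smul measurableSet_Ioo deriv_frac inj_frac]
  rw [integrableOn_congr_fun (frac_integrand s) measurableSet_Ioo]
  have := Complex.betaIntegral_convergent (u := s) (v := 1 - s) h0 (by simpa using h1)
  rw [intervalIntegrable_iff_integrableOn_Ioo_of_le zero_le_one] at this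
  exact this

lemma mellin_val (s : ℂ) (h0 : 0 < s.re) (h1 : s.re < 1) :
    mellin (fun y : ℝ => (1 / (1 + (y : ℂ)))) s = π / Complex.sin (π * s) := by
  rw [mellin, ← image_frac,
    integral_image_eq_integral_abs_deriv_smul measurableSet_Ioo deriv_frac inj_frac,
    setIntegral_congr_fun measurableSet_Ioo (frac_integrand s)]
  rw [← Complex.Gamma_mul_Gamma_one_sub,
    Complex.Gamma_mul_Gamma_eq_betaIntegral h0 (by simpa using h1), add_sub_cancel,
    Complex.Gamma_one, one_mul, Complex.betaIntegral,
    intervalIntegral.integral_of_le zero_le_one, integral_Ioc_eq_integral_Ioo]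

lemma line_integral (c : ℝ) (hc0 : 0 < c) (hc1 : c < 1) (x : ℝ) :
    ∫ t : ℝ, Complex.exp ((x : ℂ) * ((c : ℂ) + t * Complex.I)) *
      ((π : ℂ) / Complex.sin ((π : ℂ) * ((c : ℂ) + t * Complex.I)))
    = 2 * π * (1 / (1 + Complex.exp (-x))) := by
  have key : ∀ t : ℝ, mellin (fun y : ℝ => (1 / (1 + (y : ℂ)))) ((c : ℂ) + t * Complex.I)
      = (π : ℂ) / Complex.sin ((π : ℂ) * ((c : ℂ) + t * Complex.I)) := fun t =>
    mellin_val _ (by simpa using hc0) (by simpa using hc1)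
  have hinv := mellinInv_mellin_eq c (fun y : ℝ => (1 / (1 + (y : ℂ)))) (Real.exp_pos (-x))
    (mellin_conv _ (by simpa using hc0) (by simpa using hc1))
    (by
      unfold Complex.VerticalIntegrable
      simp_rw [key]
      exact csc_integrable c hc0 hc1)
    (by
      refine ContinuousAt.div (by fun_prop) (by fun_prop) ?_
      have : (1 + Real.exp (-x)) ≠ 0 := by positivity
      exact_mod_cast this)
  rw [mellinInv] at hinv
  simp_rw [key] at hinv
  have hx : ∀ s : ℂ, ((Real.exp (-x) : ℝ) : ℂ) ^ (-s) = Complex.exp (x * s) := by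
    intro s
    rw [Complex.ofReal_exp, Complex.cpow_def_of_ne_zero (Complex.exp_ne_zero _),
      ← Complex.ofReal_exp, ← Complex.ofReal_log (Real.exp_pos _).le, Real.log_exp]
    push_cast
    congr 1; ring
  simp_rw [hx, smul_eq_mul] at hinv
  rw [Complex.real_smul] at hinv
  push_cast at hinv
  rw [← hinv]
  have : (π : ℂ) ≠ 0 := by exact_mod_cast Real.pi_ne_zero
  rw [← mul_assoc, mul_one_div_cancel (mul_ne_zero two_ne_zero this), one_mul]

/-- Euler weight. -/
noncomputable def eulerW (q u : ℝ) : ℂ :=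
  (u : ℂ) ^ ((q + 1 : ℂ) - 1) * (1 - (u : ℂ)) ^ ((3 / 2 : ℂ) - 1)

lemma re_q1 (q : ℝ) (hq : 0 ≤ q) : 0 < ((q : ℂ) + 1).re := by
  simp; linarith

lemma re_32 : 0 < ((3 / 2 : ℂ)).re := by norm_num

lemma eulerW_int (q : ℝ) (hq : 0 ≤ q) : Integrable (eulerW q) (volume.restrict (Ioo 0 1)) := by
  have := Complex.betaIntegral_convergent (re_q1 q hq) re_32
  rw [intervalIntegrable_iff_integrableOn_Ioo_of_le zero_le_one] at this
  exact this

lemma W_pow (q : ℝ) (hq : 0 ≤ q) (k : ℕ) :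
    ∫ u in Ioo (0 : ℝ) 1, eulerW q u * (u : ℂ) ^ k =
      Complex.betaIntegral ((q : ℂ) + 1) (3 / 2) * ((ascPochhammer ℂ k).eval ((q : ℂ) + 1) /
      (ascPochhammer ℂ k).eval ((q : ℂ) + 5 / 2)) := by
  have h1 : ∫ u in Ioo (0 : ℝ) 1, eulerW q u * (u : ℂ) ^ k =
      Complex.betaIntegral ((q : ℂ) + 1 + k) (3 / 2) := by
    rw [Complex.betaIntegral, intervalIntegral.integral_of_le zero_le_one,
      integral_Ioc_eq_integral_Ioo]
    refine setIntegral_congr_fun measurableSet_Ioo fun u hu => ?_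
    have hu0 : (u : ℂ) ≠ 0 := by exact_mod_cast hu.1.ne'
    simp only [eulerW]
    rw [show (q : ℂ) + 1 + k - 1 = ((q : ℂ) + 1 - 1) + k by ring, Complex.cpow_add _ _ hu0,
      Complex.cpow_natCast]
    ring
  have hqk : 0 < ((q : ℂ) + 1 + k).re := by simp; positivity
  have hne : ∀ z : ℂ, 0 < z.re → ∀ k : ℕ, z ≠ -k := by
    rintro z hz k rfl
    simp at hz
    linarith [Nat.cast_nonneg (α := ℝ) k]
  have hb : 0 < ((q : ℂ) + 5 / 2).re := by
    have : ((q : ℂ) + 5 / 2).re = q + 5 / 2 := by simp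
    rw [this]; linarith
  have hbk : 0 < ((q : ℂ) + 5 / 2 + k).re := by
    rw [Complex.add_re, Complex.natCast_re]; positivity
  rw [h1, Complex.betaIntegral_eq_Gamma_mul_div _ _ hqk re_32,
    Complex.betaIntegral_eq_Gamma_mul_div _ _ (re_q1 q hq) re_32,
    ← Complex.Gamma_add_nat_div_Gamma_eq _ (hne _ (re_q1 q hq)),
    ← Complex.Gamma_add_nat_div_Gamma_eq _ (hne _ hb),
    show (q : ℂ) + 1 + k + 3 / 2 = q + 5 / 2 + k by ring,
    show (q : ℂ) + 1 + 3 / 2 = q + 5 / 2 by ring]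
  have g1 := Complex.Gamma_ne_zero_of_re_pos (re_q1 q hq)
  have g2 := Complex.Gamma_ne_zero_of_re_pos hb
  have g3 := Complex.Gamma_ne_zero_of_re_pos hbk
  generalize Complex.Gamma ((q : ℂ) + 1) = x1 at *
  generalize Complex.Gamma ((q : ℂ) + 5 / 2) = x2 at *
  generalize Complex.Gamma ((q : ℂ) + 5 / 2 + k) = x3 at *
  field_simp

lemma beta_ne (q : ℝ) (hq : 0 ≤ q) : Complex.betaIntegral ((q : ℂ) + 1) (3 / 2) ≠ 0 := by
  have h := Complex.Gamma_mul_Gamma_eq_betaIntegral (re_q1 q hq) re_32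
  intro h0
  rw [h0, mul_zero] at h
  exact mul_ne_zero (Complex.Gamma_ne_zero_of_re_pos (re_q1 q hq))
    (Complex.Gamma_ne_zero_of_re_pos re_32) h

/-- A dominated series lemma for the weight. -/
lemma W_hasSum (q : ℝ) (hq : 0 ≤ q) (g : ℕ → ℝ → ℂ) (G : ℝ → ℂ) (b : ℕ → ℝ)
    (hg : ∀ n, Continuous (g n)) (hb : Summable b)
    (hbd : ∀ n, ∀ u ∈ Ioo (0 : ℝ) 1, ‖g n u‖ ≤ b n)
    (hs : ∀ u ∈ Ioo (0 : ℝ) 1, HasSum (fun n => g n u) (G u)) :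
    HasSum (fun n => ∫ u in Ioo (0 : ℝ) 1, eulerW q u * g n u)
      (∫ u in Ioo (0 : ℝ) 1, eulerW q u * G u) := by
  refine hasSum_integral_of_dominated_convergence (fun n u => ‖eulerW q u‖ * b n) ?_ ?_ ?_ ?_ ?_
  · intro n
    exact (eulerW_int q hq).1.mul (hg n).aestronglyMeasurable
  · intro n
    refine (ae_restrict_iff' measurableSet_Ioo).2 (Filter.Eventually.of_forall fun u hu => ?_)
    rw [norm_mul]
    exact mul_le_mul_of_nonneg_left (hbd n u hu) (norm_nonneg _)
  · exact Filter.Eventually.of_forall fun u => hb.mul_left _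
  · simp_rw [tsum_mul_left]
    exact (eulerW_int q hq).norm.mul_const _
  · refine (ae_restrict_iff' measurableSet_Ioo).2 (Filter.Eventually.of_forall fun u hu => ?_)
    exact (hs u hu).mul_left _

lemma euler (q : ℝ) (hq : 0 ≤ q) (z : ℂ) :
    ∫ u in Ioo (0 : ℝ) 1, eulerW q u * Complex.exp (z * u) =
      Complex.betaIntegral ((q : ℂ) + 1) (3 / 2) * kummerM ((q : ℂ) + 1) ((q : ℂ) + 5 / 2) z := by
  have h := W_hasSum q hq (fun n u => (z * u) ^ n / (n.factorial : ℂ))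
    (fun u => Complex.exp (z * u)) (fun n => ‖z‖ ^ n / n.factorial) (by fun_prop)
    (Real.summable_pow_div_factorial _)
    (by
      intro n u hu
      rw [norm_div, norm_pow, norm_mul, Complex.norm_natCast, Complex.norm_real,
        Real.norm_of_nonneg hu.1.le]
      have h0 : 0 ≤ ‖z‖ * u := mul_nonneg (norm_nonneg z) hu.1.le
      have h1 : ‖z‖ * u ≤ ‖z‖ := mul_le_of_le_one_right (norm_nonneg z) hu.2.le
      gcongr)
    (by
      intro u hu
      rw [Complex.exp_eq_exp_ℂ]
      exact NormedSpace.expSeries_div_hasSum_exp _)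
  rw [← h.tsum_eq, kummerM, ← tsum_mul_left]
  refine tsum_congr fun k => ?_
  have : ∀ u : ℝ, eulerW q u * ((z * u) ^ k / (k.factorial : ℂ)) =
      (z ^ k / (k.factorial : ℂ)) * (eulerW q u * (u : ℂ) ^ k) := by
    intro u; rw [mul_pow]; ring
  simp_rw [this]
  rw [integral_const_mul, W_pow q hq k, div_mul_eq_div_div]
  ring

lemma rhs_hasSum (q β η : ℝ) (hq : 0 ≤ q) (hβ : 0 < β) (hη : 0 < η) :
    HasSum (fun n : ℕ => Complex.betaIntegral ((q : ℂ) + 1) (3 / 2) *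
      ((-1 : ℂ) ^ n * ((Real.exp (-(n : ℝ) * η) : ℝ) : ℂ) *
        kummerM ((q : ℂ) + 1) ((q : ℂ) + 5 / 2) (-2 * (n : ℂ) / (β : ℂ))))
      (∫ u in Ioo (0 : ℝ) 1, eulerW q u *
        (1 / (1 + Complex.exp (-((η + 2 * u / β : ℝ) : ℂ))))) := by
  have hlt : Real.exp (-η) < 1 := by rw [Real.exp_lt_one_iff]; linarith
  have hnorm : ∀ u ∈ Ioo (0 : ℝ) 1,
      ‖-Complex.exp (-((η + 2 * u / β : ℝ) : ℂ))‖ ≤ Real.exp (-η) := by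
    intro u hu
    rw [norm_neg, ← Complex.ofReal_neg, Complex.norm_exp_ofReal, Real.exp_le_exp]
    have : 0 ≤ 2 * u / β := div_nonneg (by linarith [hu.1]) hβ.le
    linarith
  have h := W_hasSum q hq (fun n u => (-Complex.exp (-((η + 2 * u / β : ℝ) : ℂ))) ^ n)
    (fun u => (1 / (1 + Complex.exp (-((η + 2 * u / β : ℝ) : ℂ)))))
    (fun n => Real.exp (-η) ^ n) (by intro n; fun_prop)
    (summable_geometric_of_lt_one (Real.exp_pos _).le hlt)
    (by
      intro n u hu
      rw [norm_pow]
      exact pow_le_pow_left₀ (norm_nonneg _) (hnorm u hu) n)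
    (by
      intro u hu
      have := hasSum_geometric_of_norm_lt_one ((hnorm u hu).trans_lt hlt)
      rw [sub_neg_eq_add] at this
      rwa [one_div])
  convert! h using 1
  funext n
  rw [mul_left_comm, ← euler q hq, ← integral_const_mul]
  refine setIntegral_congr_fun measurableSet_Ioo fun u hu => ?_
  rw [neg_pow (Complex.exp _), ← Complex.exp_nat_mul, Complex.ofReal_exp]
  have : Complex.exp (n * -((η + 2 * u / β : ℝ) : ℂ)) =
      Complex.exp ((-(n : ℝ) * η : ℝ) : ℂ) * Complex.exp (-2 * (n : ℂ) / (β : ℂ) * u) := by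
    rw [← Complex.exp_add]
    congr 1
    push_cast
    ring
  rw [this]
  ring

lemma lhs_eq (q β c η : ℝ) (hq : 0 ≤ q) (hβ : 0 < β) (hc0 : 0 < c) (hc1 : c < 1) :
    Complex.betaIntegral ((q : ℂ) + 1) (3 / 2) * F1 q β c η =
      (∫ u in Ioo (0 : ℝ) 1, eulerW q u *
        (1 / (1 + Complex.exp (-((η + 2 * u / β : ℝ) : ℂ))))) := by
  have hpi : (π : ℂ) ≠ 0 := by exact_mod_cast Real.pi_ne_zero
  have hb : (β : ℂ) ≠ 0 := by exact_mod_cast hβ.ne'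
  set csc : ℝ → ℂ := fun t => (π : ℂ) / Complex.sin ((π : ℂ) * ((c : ℂ) + t * Complex.I)) with hcsc
  have hint : Integrable (Function.uncurry fun (t u : ℝ) =>
      Complex.exp (((η + 2 * u / β : ℝ) : ℂ) * ((c : ℂ) + t * Complex.I)) *
        (csc t * eulerW q u)) (volume.prod (volume.restrict (Ioo 0 1))) := by
    have h1 := (csc_integrable c hc0 hc1).mul_prod (eulerW_int q hq)
    refine h1.bdd_mul (c := Real.exp ((|η| + 2 / β) * c))
      (f := fun p : ℝ × ℝ => Complex.exp (((η + 2 * p.2 / β : ℝ) : ℂ) *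
        ((c : ℂ) + p.1 * Complex.I))) ?_ ?_
    · exact Continuous.aestronglyMeasurable (by fun_prop)
    · have hae : ∀ᵐ p : ℝ × ℝ ∂(volume.prod (volume.restrict (Ioo (0 : ℝ) 1))),
          p.2 ∈ Ioo (0 : ℝ) 1 := by
        refine Measure.quasiMeasurePreserving_snd.ae ?_
        exact ae_restrict_mem measurableSet_Ioo
      filter_upwards [hae] with p hp
      rw [Complex.norm_exp, Real.exp_le_exp]
      have : (((η + 2 * p.2 / β : ℝ) : ℂ) * ((c : ℂ) + p.1 * Complex.I)).re =
          (η + 2 * p.2 / β) * c := by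
        rw [Complex.re_ofReal_mul]; simp
      rw [this]
      have h2 : 2 * p.2 / β ≤ 2 / β := by
        gcongr; linarith [hp.2]
      have := le_abs_self η
      gcongr
  have hswap := integral_integral_swap hint
  have hR : ∀ u : ℝ, ∫ t : ℝ, Complex.exp (((η + 2 * u / β : ℝ) : ℂ) *
      ((c : ℂ) + t * Complex.I)) * (csc t * eulerW q u) =
      2 * π * (eulerW q u * (1 / (1 + Complex.exp (-((η + 2 * u / β : ℝ) : ℂ))))) := by
    intro u
    simp_rw [← mul_assoc]
    rw [integral_mul_const, line_integral c hc0 hc1]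
    ring
  have hL : ∀ t : ℝ, ∫ u in Ioo (0 : ℝ) 1, Complex.exp (((η + 2 * u / β : ℝ) : ℂ) *
      ((c : ℂ) + t * Complex.I)) * (csc t * eulerW q u) =
      Complex.betaIntegral ((q : ℂ) + 1) (3 / 2) * (Complex.exp ((η : ℂ) * ((c : ℂ) + t * Complex.I)) *
      f1 q β ((c : ℂ) + t * Complex.I) / ((c : ℂ) + t * Complex.I)) := by
    intro t
    have hs : (c : ℂ) + t * Complex.I ≠ 0 := by
      intro h
      have := congrArg Complex.re h
      simp at this
      linarith
    have e : ∀ u : ℝ, Complex.exp (((η + 2 * u / β : ℝ) : ℂ) *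
      ((c : ℂ) + t * Complex.I)) * (csc t * eulerW q u) =
      (Complex.exp ((η : ℂ) * ((c : ℂ) + t * Complex.I)) * csc t) *
        (eulerW q u * Complex.exp (2 * ((c : ℂ) + t * Complex.I) / β * u)) := by
      intro u
      rw [show ((η + 2 * u / β : ℝ) : ℂ) * ((c : ℂ) + t * Complex.I) =
        (η : ℂ) * ((c : ℂ) + t * Complex.I) + 2 * ((c : ℂ) + t * Complex.I) / β * u by
          push_cast; ring, Complex.exp_add]
      ring
    simp_rw [e]
    rw [integral_const_mul, euler q hq, f1, hcsc]
    have := sin_ne c hc0 hc1 t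
    simp only
    field_simp
  simp_rw [hR, hL] at hswap
  rw [integral_const_mul, integral_const_mul] at hswap
  rw [F1, mul_left_comm, hswap]
  field_simp

theorem stmt6 (q β c : ℝ) (hq : 0 ≤ q) (hhalf : ∀ k : ℕ, q ≠ (k : ℝ) + 1 / 2)
    (hβ : 0 < β) (hc0 : 0 < c) (hc1 : c < 1) :
    ∀ η : ℝ, 0 < η →
      Summable (fun n : ℕ => (-1 : ℂ) ^ n * ((Real.exp (-(n : ℝ) * η) : ℝ) : ℂ) *
        kummerM ((q : ℂ) + 1) ((q : ℂ) + 5 / 2) (-2 * (n : ℂ) / (β : ℂ))) ∧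
      F1 q β c η = ∑' n : ℕ, (-1 : ℂ) ^ n * ((Real.exp (-(n : ℝ) * η) : ℝ) : ℂ) *
        kummerM ((q : ℂ) + 1) ((q : ℂ) + 5 / 2) (-2 * (n : ℂ) / (β : ℂ)) := by
  intro η hη
  have h := rhs_hasSum q β η hq hβ hη
  rw [← lhs_eq q β c η hq hβ hc0 hc1] at h
  have h' := (hasSum_mul_left_iff (beta_ne q hq)).1 h
  exact ⟨h'.summable, h'.tsum_eq.symm⟩
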